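/- D is a *-SH domain if and only if D has finite *-character and, for every pair P, Q of distinct maximal *-ideals of D, P ∩ Q contains no nonzero prime ideal of D. -/

import Mathlib

open scoped nonZeroDivisors

/-- A star operation on the nonzero fractional ideals of an integral domain `D`
with quotient field `K`: it fixes nonzero principal fractional ideals, commutes with
multiplication by nonzero principal fractional ideals, is extensive, monotone and
idempotent (on nonzero fractional ideals). -/
structure StarOperation (D K : Type*) [CommRing D] [IsDomain D] [Field K]
    [Algebra D K] [IsFractionRing D K] where
  star : FractionalIdeal D⁰ K → FractionalIdeal D⁰ K
  star_spanSingleton : ∀ x : K, x ≠ 0 →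
    star (FractionalIdeal.spanSingleton D⁰ x) = FractionalIdeal.spanSingleton D⁰ x
  star_smul : ∀ (x : K) (I : FractionalIdeal D⁰ K), x ≠ 0 → I ≠ 0 →
    star (FractionalIdeal.spanSingleton D⁰ x * I) = FractionalIdeal.spanSingleton D⁰ x * star I
  le_star : ∀ I : FractionalIdeal D⁰ K, I ≠ 0 → I ≤ star I
  star_mono : ∀ I J : FractionalIdeal D⁰ K, I ≠ 0 → J ≠ 0 → I ≤ J → star I ≤ star J
  star_idem : ∀ I : FractionalIdeal D⁰ K, I ≠ 0 → star (star I) = star I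

namespace StarOperation

variable {D K : Type*} [CommRing D] [IsDomain D] [Field K] [Algebra D K] [IsFractionRing D K]
variable (s : StarOperation D K)

/-- `*` has finite character: for every nonzero fractional ideal `I`, `I^*` is the union
of `J^*` over the nonzero finitely generated fractional subideals `J` of `I`. -/
def FiniteCharacter : Prop :=
  ∀ I : FractionalIdeal D⁰ K, I ≠ 0 → ∀ x ∈ s.star I,
    ∃ J : FractionalIdeal D⁰ K, J ≠ 0 ∧ (J : Submodule D K).FG ∧ J ≤ I ∧ x ∈ s.star J

/-- A (nonzero) integral ideal `I` of `D` is a `*`-ideal if `I^* = I`. -/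
def IsStarIdeal (I : Ideal D) : Prop :=
  I ≠ ⊥ ∧ s.star (I : FractionalIdeal D⁰ K) = (I : FractionalIdeal D⁰ K)

/-- An integral ideal `I` of `D` is a `*`-ideal of finite type if `I = J^*` for some
nonzero finitely generated ideal `J`. -/
def IsFiniteTypeStarIdeal (I : Ideal D) : Prop :=
  ∃ J : Ideal D, J ≠ ⊥ ∧ J.FG ∧
    s.star (J : FractionalIdeal D⁰ K) = (I : FractionalIdeal D⁰ K)

/-- A maximal `*`-ideal: maximal among proper integral `*`-ideals. -/
def IsMaxStarIdeal (M : Ideal D) : Prop :=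
  M ≠ ⊤ ∧ s.IsStarIdeal M ∧ ∀ J : Ideal D, J ≠ ⊤ → s.IsStarIdeal J → M ≤ J → J = M

/-- `I` is `*`-homogeneous: a proper `*`-ideal of finite type such that `(J + J')^* ≠ D`
for every pair `J`, `J'` of proper `*`-ideals of finite type containing `I`. -/
def IsHomog (I : Ideal D) : Prop :=
  I ≠ ⊤ ∧ s.IsStarIdeal I ∧ s.IsFiniteTypeStarIdeal I ∧
    ∀ J J' : Ideal D, J ≠ ⊤ → J' ≠ ⊤ → s.IsStarIdeal J → s.IsStarIdeal J' →
      s.IsFiniteTypeStarIdeal J → s.IsFiniteTypeStarIdeal J' → I ≤ J → I ≤ J' →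
      s.star ((J + J' : Ideal D) : FractionalIdeal D⁰ K) ≠ 1

/-- The set `M(I) = {x ∈ D : (xD + I)^* ≠ D}` attached to an ideal `I`. -/
def MSet (I : Ideal D) : Set D :=
  {x : D | s.star ((Ideal.span {x} + I : Ideal D) : FractionalIdeal D⁰ K) ≠ 1}

/-- `A` and `B` are `*`-comaximal if `(A + B)^* = D`. -/
def StarComaximal (A B : Ideal D) : Prop :=
  s.star ((A + B : Ideal D) : FractionalIdeal D⁰ K) = 1

/-- An integral ideal `I` is `*`-invertible if `(I · I⁻¹)^* = D`. -/
def StarInvertible (I : Ideal D) : Prop :=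
  s.star ((I : FractionalIdeal D⁰ K) * (I : FractionalIdeal D⁰ K)⁻¹) = 1

/-- `D` is a `*`-SH domain: every principal ideal generated by a nonzero nonunit is a
`*`-product of finitely many `*`-homogeneous ideals. -/
def IsSHDomain : Prop :=
  ∀ x : D, x ≠ 0 → ¬IsUnit x →
    ∃ T : Multiset (Ideal D), (∀ J ∈ T, s.IsHomog J) ∧
      s.star ((T.prod : Ideal D) : FractionalIdeal D⁰ K) =
        ((Ideal.span {x} : Ideal D) : FractionalIdeal D⁰ K)

/-- `D` has finite `*`-character: every nonzero nonunit lies in only finitely many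
maximal `*`-ideals. -/
def FiniteStarCharacter : Prop :=
  ∀ x : D, x ≠ 0 → ¬IsUnit x → {P : Ideal D | s.IsMaxStarIdeal P ∧ x ∈ P}.Finite

end StarOperation

namespace StarOperation

section Helpers

variable {D K : Type*} [CommRing D] [IsDomain D] [Field K] [Algebra D K] [IsFractionRing D K]
variable (s : StarOperation D K)

/-- The star closure of an integral ideal, as an integral ideal. -/
def cl (I : Ideal D) : Ideal D :=
  Submodule.comap (Algebra.linearMap D K)
    ((s.star (I : FractionalIdeal D⁰ K) : FractionalIdeal D⁰ K) : Submodule D K)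

theorem mem_cl {I : Ideal D} {d : D} :
    d ∈ s.cl I ↔ algebraMap D K d ∈ s.star (I : FractionalIdeal D⁰ K) := Iff.rfl

theorem coe_ne {I : Ideal D} (hI : I ≠ ⊥) : (I : FractionalIdeal D⁰ K) ≠ 0 :=
  FractionalIdeal.coeIdeal_ne_zero.mpr hI

theorem star_one : s.star 1 = 1 := by
  have := s.star_spanSingleton 1 one_ne_zero
  simpa using this

theorem coe_cl {I : Ideal D} (hI : I ≠ ⊥) :
    s.star (I : FractionalIdeal D⁰ K) = (s.cl I : FractionalIdeal D⁰ K) := by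
  have h1 : s.star (I : FractionalIdeal D⁰ K) ≤ 1 := by
    rw [← s.star_one]
    exact s.star_mono _ _ (coe_ne hI) one_ne_zero FractionalIdeal.coeIdeal_le_one
  obtain ⟨J, hJ⟩ := FractionalIdeal.le_one_iff_exists_coeIdeal.mp h1
  rw [← hJ]
  congr 1
  ext d
  rw [mem_cl, ← hJ, FractionalIdeal.mem_coeIdeal]
  constructor
  · intro h; exact ⟨d, h, rfl⟩
  · rintro ⟨e, he, h⟩
    rwa [← IsFractionRing.injective D K h]

theorem le_cl {I : Ideal D} (hI : I ≠ ⊥) : I ≤ s.cl I := by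
  have := s.le_star _ (coe_ne (K := K) hI)
  rw [s.coe_cl hI] at this
  exact (FractionalIdeal.coeIdeal_le_coeIdeal K).mp this

theorem cl_ne {I : Ideal D} (hI : I ≠ ⊥) : s.cl I ≠ ⊥ :=
  fun h => hI (le_bot_iff.mp (h ▸ s.le_cl hI))

theorem cl_mono {I J : Ideal D} (hI : I ≠ ⊥) (h : I ≤ J) : s.cl I ≤ s.cl J := by
  have hJ : J ≠ ⊥ := fun h' => hI (le_bot_iff.mp (h' ▸ h))
  have := s.star_mono _ _ (coe_ne (K := K) hI) (coe_ne hJ)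
    ((FractionalIdeal.coeIdeal_le_coeIdeal K).mpr h)
  rw [s.coe_cl hI, s.coe_cl hJ] at this
  exact (FractionalIdeal.coeIdeal_le_coeIdeal K).mp this

theorem cl_cl {I : Ideal D} (hI : I ≠ ⊥) : s.cl (s.cl I) = s.cl I := by
  have := s.star_idem _ (coe_ne (K := K) hI)
  rw [s.coe_cl hI, s.coe_cl (s.cl_ne hI)] at this
  exact FractionalIdeal.coeIdeal_injective this

theorem isStarIdeal_iff {I : Ideal D} : s.IsStarIdeal I ↔ I ≠ ⊥ ∧ s.cl I = I := by
  refine and_congr_right fun hI => ?_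
  rw [s.coe_cl hI]
  exact FractionalIdeal.coeIdeal_injective.eq_iff

theorem star_eq_one_iff {I : Ideal D} (hI : I ≠ ⊥) :
    s.star (I : FractionalIdeal D⁰ K) = 1 ↔ s.cl I = ⊤ := by
  rw [s.coe_cl hI, ← FractionalIdeal.coeIdeal_top]
  exact FractionalIdeal.coeIdeal_injective.eq_iff

theorem cl_span {x : D} (hx : x ≠ 0) : s.cl (Ideal.span {x}) = Ideal.span {x} := by
  have hI : Ideal.span {x} ≠ ⊥ := by simpa using hx
  have := s.star_spanSingleton (algebraMap D K x) (by simpa using hx)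
  rw [← FractionalIdeal.coeIdeal_span_singleton, s.coe_cl hI] at this
  exact FractionalIdeal.coeIdeal_injective this

theorem mul_mem_cl {I J : Ideal D} (hI : I ≠ ⊥) {a d : D} (h : ∀ i ∈ I, a * i ∈ J)
    (hd : d ∈ s.cl I) : a * d ∈ s.cl J := by
  by_cases ha : a = 0
  · simp [ha]
  have hN : Ideal.span {a} * I ≠ ⊥ := by
    simp [hI, ha]
  have hle : Ideal.span {a} * I ≤ J := by
    rw [Ideal.span_singleton_mul_le_iff]
    exact h
  apply s.cl_mono hN hle
  rw [mem_cl, FractionalIdeal.coeIdeal_mul, FractionalIdeal.coeIdeal_span_singleton,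
    s.star_smul _ _ (by simpa using ha) (coe_ne hI), map_mul]
  exact FractionalIdeal.mul_mem_mul (FractionalIdeal.mem_spanSingleton_self _ _) hd

theorem cl_fin (hs : s.FiniteCharacter) {I : Ideal D} (hI : I ≠ ⊥) {d : D} (hd : d ∈ s.cl I) :
    ∃ J : Ideal D, J ≠ ⊥ ∧ J.FG ∧ J ≤ I ∧ d ∈ s.cl J := by
  obtain ⟨J, hJ0, hJf, hJI, hdJ⟩ := hs _ (coe_ne hI) _ hd
  obtain ⟨J', rfl⟩ := FractionalIdeal.le_one_iff_exists_coeIdeal.mp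
    (hJI.trans FractionalIdeal.coeIdeal_le_one)
  refine ⟨J', FractionalIdeal.coeIdeal_ne_zero.mp hJ0, ?_,
    (FractionalIdeal.coeIdeal_le_coeIdeal K).mp hJI, hdJ⟩
  exact (FractionalIdeal.coeIdeal_fg D⁰ (IsFractionRing.injective D K) J').mp hJf

theorem exists_max (hs : s.FiniteCharacter) {I : Ideal D} (hI : I ≠ ⊥) (h : s.cl I ≠ ⊤) :
    ∃ P, s.IsMaxStarIdeal P ∧ I ≤ P := by
  obtain ⟨P, hIP, hP⟩ := zorn_le_nonempty₀ {J : Ideal D | J ≠ ⊤ ∧ s.IsStarIdeal J} (by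
    intro c hc hch y hy
    have hne : sSup c ≠ ⊥ := fun h' => (hc hy).2.1 (le_bot_iff.mp (h' ▸ le_sSup hy))
    have hdir : DirectedOn (· ≤ ·) c := hch.directedOn
    refine ⟨sSup c, ⟨?_, ?_⟩, fun z hz => le_sSup hz⟩
    · intro ht
      have : (1 : D) ∈ sSup c := by rw [ht]; trivial
      obtain ⟨z, hz, h1⟩ := (Submodule.mem_sSup_of_directed ⟨y, hy⟩ hdir).mp this
      exact (hc hz).1 ((Ideal.eq_top_iff_one z).mpr h1)
    · rw [isStarIdeal_iff]
      refine ⟨hne, le_antisymm ?_ (s.le_cl hne)⟩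
      intro d hd
      obtain ⟨J, hJ0, hJf, hJc, hdJ⟩ := s.cl_fin hs hne hd
      obtain ⟨z, hz, hJz⟩ := (CompleteLattice.isCompactElement_iff_le_of_directed_sSup_le _ J).mp
        ((Submodule.fg_iff_compact J).mp hJf) c ⟨y, hy⟩ hdir hJc
      apply le_sSup hz
      have := s.cl_mono hJ0 hJz hdJ
      rwa [((s.isStarIdeal_iff).mp (hc hz).2).2] at this) (s.cl I)
      ⟨h, s.isStarIdeal_iff.mpr ⟨s.cl_ne hI, s.cl_cl hI⟩⟩
  refine ⟨P, ⟨hP.prop.1, hP.prop.2, fun J h1 h2 h3 => le_antisymm ?_ h3⟩, (s.le_cl hI).trans hIP⟩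
  exact hP.2 ⟨h1, h2⟩ h3

theorem cl_top_of (hs : s.FiniteCharacter) {I : Ideal D} (hI : I ≠ ⊥)
    (h : ∀ P, s.IsMaxStarIdeal P → ¬ I ≤ P) : s.cl I = ⊤ := by
  by_contra h'
  obtain ⟨P, hP, hIP⟩ := s.exists_max hs hI h'
  exact h P hP hIP

theorem IsMaxStarIdeal.cl_eq {s : StarOperation D K} {P : Ideal D} (hP : s.IsMaxStarIdeal P) :
    s.cl P = P := (s.isStarIdeal_iff.mp hP.2.1).2

theorem IsMaxStarIdeal.ne_bot {s : StarOperation D K} {P : Ideal D} (hP : s.IsMaxStarIdeal P) :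
    P ≠ ⊥ := hP.2.1.1

theorem IsMaxStarIdeal.eq_of_le {s : StarOperation D K} {P Q : Ideal D}
    (hP : s.IsMaxStarIdeal P) (hQ : s.IsMaxStarIdeal Q) (h : P ≤ Q) : Q = P :=
  hP.2.2 Q hQ.1 hQ.2.1 h

theorem ne_bot_of_le {I J : Ideal D} (hI : I ≠ ⊥) (h : I ≤ J) : J ≠ ⊥ :=
  fun h' => hI (le_bot_iff.mp (h' ▸ h))

theorem IsMaxStarIdeal.isPrime {s : StarOperation D K} (hs : s.FiniteCharacter) {P : Ideal D}
    (hP : s.IsMaxStarIdeal P) : P.IsPrime := by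
  refine ⟨hP.1, fun {a b} hab => ?_⟩
  by_contra! hcon
  obtain ⟨ha, hb⟩ := hcon
  have hN : P ⊔ Ideal.span {a} ≠ ⊥ := ne_bot_of_le hP.ne_bot le_sup_left
  have ht : s.cl (P ⊔ Ideal.span {a}) = ⊤ := by
    refine s.cl_top_of hs hN fun Q hQ hle => ha ?_
    rw [← hP.eq_of_le hQ (le_sup_left.trans hle)]
    exact (le_sup_right.trans hle) (Ideal.mem_span_singleton_self a)
  have h1 : (1 : D) ∈ s.cl (P ⊔ Ideal.span {a}) := by rw [ht]; trivial
  have := s.mul_mem_cl (J := P) (a := b) hN (by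
    intro i hi
    obtain ⟨p, hp, q, hq, rfl⟩ := Submodule.mem_sup.mp hi
    obtain ⟨c, rfl⟩ := Ideal.mem_span_singleton'.mp hq
    rw [mul_add]
    refine P.add_mem (P.mul_mem_left _ hp) ?_
    have : b * (c * a) = c * (a * b) := by ring
    rw [this]
    exact P.mul_mem_left _ hab) h1
  rw [mul_one, hP.cl_eq] at this
  exact hb this

theorem cl_mul_le {A B : Ideal D} (hA : A ≠ ⊥) (hB : B ≠ ⊥) :
    s.cl A * s.cl B ≤ s.cl (A * B) := by
  have hAB : A * B ≠ ⊥ := by simp [hA, hB]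
  rw [Ideal.mul_le]
  intro a ha b hb
  rw [← s.cl_cl hAB, mul_comm a b]
  refine s.mul_mem_cl hA (fun i hi => ?_) ha
  rw [mul_comm b i]
  exact s.mul_mem_cl hB (fun j hj => Ideal.mul_mem_mul hi hj) hb

theorem prod_cl_le {ι : Type*} (F : Finset ι) (A : ι → Ideal D) (hA : ∀ i, A i ≠ ⊥) :
    ∏ i ∈ F, s.cl (A i) ≤ s.cl (∏ i ∈ F, A i) := by
  classical
  induction F using Finset.induction_on with
  | empty =>
    simp only [Finset.prod_empty]
    exact s.le_cl (by simp)
  | insert i F hi ih =>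
    rw [Finset.prod_insert hi, Finset.prod_insert hi]
    refine (Ideal.mul_mono le_rfl ih).trans (s.cl_mul_le (hA i) ?_)
    exact Finset.prod_ne_zero_iff.mpr fun j _ => hA j

theorem IsHomog.unique {s : StarOperation D K} (hs : s.FiniteCharacter) {I : Ideal D}
    (hI : s.IsHomog I) {P Q : Ideal D} (hP : s.IsMaxStarIdeal P) (hQ : s.IsMaxStarIdeal Q)
    (hIP : I ≤ P) (hIQ : I ≤ Q) : P = Q := by
  by_contra hne
  obtain ⟨-, hIs, ⟨I0, hI0, hI0f, hI0s⟩, hh⟩ := hI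
  rw [s.coe_cl hI0] at hI0s
  have hI0s : s.cl I0 = I := FractionalIdeal.coeIdeal_injective hI0s
  have hPQ : P ⊔ Q ≠ ⊥ := ne_bot_of_le hP.ne_bot le_sup_left
  have ht : s.cl (P ⊔ Q) = ⊤ := by
    refine s.cl_top_of hs hPQ fun M hM hle => hne ?_
    rw [← hP.eq_of_le hM (le_sup_left.trans hle), hQ.eq_of_le hM (le_sup_right.trans hle)]
  -- reduce to an element of `P` outside `Q`
  have hPnQ : ¬ P ≤ Q := fun h => hne (hP.eq_of_le hQ h).symm
  obtain ⟨a, haP, haQ⟩ := SetLike.not_le_iff_exists.mp hPnQ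
  have hN : Q ⊔ Ideal.span {a} ≠ ⊥ := ne_bot_of_le hQ.ne_bot le_sup_left
  have ht : s.cl (Q ⊔ Ideal.span {a}) = ⊤ := by
    refine s.cl_top_of hs hN fun M hM hle => haQ ?_
    rw [← hQ.eq_of_le hM (le_sup_left.trans hle)]
    exact (le_sup_right.trans hle) (Ideal.mem_span_singleton_self a)
  have h1 : (1 : D) ∈ s.cl (Q ⊔ Ideal.span {a}) := by rw [ht]; trivial
  obtain ⟨A, hA0, hAf, hAle, h1A⟩ := s.cl_fin hs hN h1
  -- finitely generated `q ≤ Q` with `A ≤ q ⊔ (a)`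
  obtain ⟨q, hqf, hqQ, hAq⟩ : ∃ q : Ideal D, q.FG ∧ q ≤ Q ∧ A ≤ q ⊔ Ideal.span {a} := by
    obtain ⟨G, rfl⟩ := hAf
    have : ∀ g : D, ∃ p ∈ Q, g ∈ G → g - p ∈ Ideal.span {a} := by
      intro g
      by_cases hg : g ∈ G
      · obtain ⟨p, hp, r, hr, hpr⟩ := Submodule.mem_sup.mp (hAle (Submodule.subset_span hg))
        exact ⟨p, hp, fun _ => by rw [← hpr]; simpa using hr⟩
      · exact ⟨0, Q.zero_mem, fun h => absurd h hg⟩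
    choose f hfQ hf using this
    classical
    refine ⟨Ideal.span (G.image f : Finset D), ⟨_, rfl⟩, ?_, ?_⟩
    · rw [Ideal.span_le]
      intro y hy
      obtain ⟨g, -, rfl⟩ := Finset.mem_image.mp (Finset.mem_coe.mp hy)
      exact hfQ g
    · refine Submodule.span_le.mpr fun g hg => ?_
      refine Submodule.mem_sup.mpr ⟨f g, ?_, g - f g, hf g hg, by ring⟩
      exact Ideal.subset_span (Finset.mem_coe.mpr (Finset.mem_image_of_mem f hg))
  have hb1 : I0 ⊔ Ideal.span {a} ≠ ⊥ := ne_bot_of_le hI0 le_sup_left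
  have hb2 : I0 ⊔ q ≠ ⊥ := ne_bot_of_le hI0 le_sup_left
  have hI0I : I0 ≤ I := hI0s ▸ s.le_cl hI0
  have hle1 : s.cl (I0 ⊔ Ideal.span {a}) ≤ P := by
    rw [← hP.cl_eq]
    refine s.cl_mono hb1 (sup_le (hI0I.trans hIP) ?_)
    rw [Ideal.span_le]; simpa using haP
  have hle2 : s.cl (I0 ⊔ q) ≤ Q := by
    rw [← hQ.cl_eq]
    exact s.cl_mono hb2 (sup_le (hI0I.trans hIQ) hqQ)
  have key := hh (s.cl (I0 ⊔ Ideal.span {a})) (s.cl (I0 ⊔ q))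
    (fun h => hP.1 (top_le_iff.mp (h ▸ hle1))) (fun h => hQ.1 (top_le_iff.mp (h ▸ hle2)))
    (s.isStarIdeal_iff.mpr ⟨s.cl_ne hb1, s.cl_cl hb1⟩)
    (s.isStarIdeal_iff.mpr ⟨s.cl_ne hb2, s.cl_cl hb2⟩)
    ⟨_, hb1, Submodule.FG.sup hI0f ⟨{a}, by simp [Ideal.span]⟩, s.coe_cl hb1⟩
    ⟨_, hb2, Submodule.FG.sup hI0f hqf, s.coe_cl hb2⟩
    (hI0s ▸ s.cl_mono hI0 le_sup_left) (hI0s ▸ s.cl_mono hI0 le_sup_left)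
  apply key
  have hsum : s.cl (I0 ⊔ Ideal.span {a}) + s.cl (I0 ⊔ q) ≠ ⊥ :=
    ne_bot_of_le (s.cl_ne hb1) le_sup_left
  rw [s.star_eq_one_iff hsum, Ideal.eq_top_iff_one]
  refine s.cl_mono hA0 (hAq.trans (sup_le ?_ ?_)) h1A
  · exact (le_sup_right.trans (s.le_cl hb2)).trans le_sup_right
  · exact (le_sup_right.trans (s.le_cl hb1)).trans le_sup_left

theorem exists_homog_mem {s : StarOperation D K} {x : D} (hx : x ≠ 0) {T : Multiset (Ideal D)}
    (hT : ∀ J ∈ T, s.IsHomog J)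
    (hTx : s.star ((T.prod : Ideal D) : FractionalIdeal D⁰ K) =
        ((Ideal.span {x} : Ideal D) : FractionalIdeal D⁰ K))
    {L : Ideal D} (hL : L.IsPrime) (hxL : x ∈ L) : ∃ J ∈ T, J ≤ L := by
  have h0 : T.prod ≠ ⊥ := by
    intro h
    have : (0 : Ideal D) ∈ T := Multiset.prod_eq_zero_iff.mp h
    exact (hT _ this).2.1.1 rfl
  rw [s.coe_cl h0] at hTx
  have hTx : s.cl T.prod = Ideal.span {x} := FractionalIdeal.coeIdeal_injective hTx
  have : T.prod ≤ L := by
    refine (s.le_cl h0).trans (hTx ▸ ?_)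
    rw [Ideal.span_le]; simpa using hxL
  exact (Ideal.IsPrime.multiset_prod_le hL).mp this

theorem forward (hs : s.FiniteCharacter) (h : s.IsSHDomain) :
    s.FiniteStarCharacter ∧
      ∀ P Q : Ideal D, s.IsMaxStarIdeal P → s.IsMaxStarIdeal Q → P ≠ Q →
        ∀ L : Ideal D, L.IsPrime → L ≠ ⊥ → ¬(L ≤ P ⊓ Q) := by
  constructor
  · intro x hx hu
    obtain ⟨T, hT, hTx⟩ := h x hx hu
    classical
    have : ∀ P : {P : Ideal D | s.IsMaxStarIdeal P ∧ x ∈ P}, ∃ J ∈ T, J ≤ P.1 := fun P =>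
      exists_homog_mem hx hT hTx (P.2.1.isPrime hs) P.2.2
    choose f hfT hf using this
    have hinj : Function.Injective (fun P => (⟨f P, Multiset.mem_toFinset.mpr (hfT P)⟩ : T.toFinset)) := by
      intro P Q hPQ
      have hPQ : f P = f Q := congrArg Subtype.val hPQ
      exact Subtype.ext ((hT _ (hfT P)).unique hs P.2.1 Q.2.1 (hf P) (hPQ ▸ hf Q))
    exact Set.finite_coe_iff.mp (Finite.of_injective _ hinj)
  · intro P Q hP hQ hne L hL hL0 hle
    obtain ⟨x, hxL, hx⟩ := Submodule.exists_mem_ne_zero_of_ne_bot hL0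
    have hu : ¬ IsUnit x := fun hu => hL.ne_top (Ideal.eq_top_of_isUnit_mem _ hxL hu)
    obtain ⟨T, hT, hTx⟩ := h x hx hu
    obtain ⟨J, hJ, hJL⟩ := exists_homog_mem hx hT hTx hL hxL
    exact hne ((hT J hJ).unique hs hP hQ ((hJL.trans hle).trans inf_le_left)
      ((hJL.trans hle).trans inf_le_right))

/-- If no nonzero prime lies in `P ∩ Q`, a nonzero `x` divides `a * b`, `a ∉ P`, `b ∉ Q`. -/
theorem exists_mul (P Q : Ideal D) [P.IsPrime] [Q.IsPrime] {x : D} (hx : x ≠ 0)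
    (h : ∀ L : Ideal D, L.IsPrime → L ≠ ⊥ → ¬(L ≤ P ⊓ Q)) :
    ∃ a b, a ∉ P ∧ b ∉ Q ∧ x ∣ a * b := by
  by_contra! hcon
  obtain ⟨L, hL, hxL, hdis⟩ := Ideal.exists_le_prime_disjoint (Ideal.span {x})
    (P.primeCompl ⊔ Q.primeCompl) (by
      rw [Set.disjoint_left]
      intro y hy hy'
      obtain ⟨a, ha, b, hb, rfl⟩ := Submonoid.mem_sup.mp hy'
      exact hcon a b ha hb (Ideal.mem_span_singleton.mp hy))
  refine h L hL (ne_bot_of_le (by simpa using hx) hxL) (le_inf ?_ ?_)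
  · intro y hy
    by_contra hyP
    exact Set.disjoint_left.mp hdis hy ((le_sup_left : P.primeCompl ≤ _ ⊔ Q.primeCompl) hyP)
  · intro y hy
    by_contra hyP
    exact Set.disjoint_left.mp hdis hy ((le_sup_right : Q.primeCompl ≤ P.primeCompl ⊔ _) hyP)

/-- Local membership at all maximal star ideals implies membership in the star closure. -/
theorem mem_cl_of_local (hs : s.FiniteCharacter) {I : Ideal D} (hI : I ≠ ⊥) {y : D}
    (h : ∀ P, s.IsMaxStarIdeal P → ∃ t, t ∉ P ∧ y * t ∈ I) : y ∈ s.cl I := by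
  let C : Ideal D := Submodule.comap (LinearMap.mulLeft D y) I
  have hIC : I ≤ C := fun i hi => I.mul_mem_left _ hi
  have hC : C ≠ ⊥ := ne_bot_of_le hI hIC
  have ht : s.cl C = ⊤ := s.cl_top_of hs hC fun P hP hle => by
    obtain ⟨t, ht, hyt⟩ := h P hP
    exact ht (hle hyt)
  have := s.mul_mem_cl (J := I) (a := y) (d := 1) hC (fun i hi => hi) (by rw [ht]; trivial)
  rwa [mul_one] at this

theorem exists_notMem_prod {ι : Type*} {P : Ideal D} [P.IsPrime] (F : Finset ι) (A : ι → Ideal D)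
    (h : ∀ i ∈ F, ¬ A i ≤ P) : ∃ t ∈ ∏ i ∈ F, A i, t ∉ P := by
  have : ¬ ∏ i ∈ F, A i ≤ P := by
    rw [Ideal.IsPrime.prod_le inferInstance]
    push Not
    exact h
  exact SetLike.not_le_iff_exists.mp this

set_option maxHeartbeats 400000 in
theorem backward (hs : s.FiniteCharacter) (hfin : s.FiniteStarCharacter)
    (hpr : ∀ P Q : Ideal D, s.IsMaxStarIdeal P → s.IsMaxStarIdeal Q → P ≠ Q →
        ∀ L : Ideal D, L.IsPrime → L ≠ ⊥ → ¬(L ≤ P ⊓ Q)) : s.IsSHDomain := by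
  classical
  intro x hx hu
  have hF := hfin x hx hu
  set F : Finset (Ideal D) := hF.toFinset with hFdef
  have hmem : ∀ P, P ∈ F ↔ s.IsMaxStarIdeal P ∧ x ∈ P := fun P => by simp [hFdef]
  have hsx : Ideal.span {x} ≠ ⊥ := by simpa using hx
  have hex : ∀ P Q : Ideal D, ∃ a b : D, s.IsMaxStarIdeal P → s.IsMaxStarIdeal Q → P ≠ Q →
      a ∉ P ∧ b ∉ Q ∧ x ∣ a * b := by
    intro P Q
    by_cases hc : s.IsMaxStarIdeal P ∧ s.IsMaxStarIdeal Q ∧ P ≠ Q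
    · obtain ⟨hP, hQ, hne⟩ := hc
      have := hP.isPrime hs
      have := hQ.isPrime hs
      obtain ⟨a, b, h⟩ := exists_mul P Q hx (hpr P Q hP hQ hne)
      exact ⟨a, b, fun _ _ _ => h⟩
    · exact ⟨0, 0, fun h1 h2 h3 => absurd ⟨h1, h2, h3⟩ hc⟩
  choose a b hab using hex
  obtain ⟨A, hAdef⟩ : ∃ A : Ideal D → Ideal D, ∀ P,
      A P = Ideal.span ((insert x ((F.erase P).image (b P)) : Finset D) : Set D) :=
    ⟨_, fun _ => rfl⟩
  have hxA : ∀ P, x ∈ A P := fun P => by rw [hAdef]; exact Ideal.subset_span (by simp)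
  have hbA : ∀ P, ∀ Q ∈ F, Q ≠ P → b P Q ∈ A P := fun P Q hQ hne => by
    rw [hAdef]
    exact Ideal.subset_span (Finset.mem_coe.mpr (Finset.mem_insert_of_mem
      (Finset.mem_image_of_mem _ (Finset.mem_erase.mpr ⟨hne, hQ⟩))))
  have hA0 : ∀ P, A P ≠ ⊥ := fun P h => hx (by simpa [h] using hxA P)
  have hnot : ∀ P ∈ F, ∀ Q ∈ F, Q ≠ P → ¬ A P ≤ Q := fun P hP Q hQ hne hle =>
    (hab P Q ((hmem P).mp hP).1 ((hmem Q).mp hQ).1 hne.symm).2.1 (hle (hbA P Q hQ hne))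
  -- local description of `A P` at `P`
  have hloc : ∀ P ∈ F, ∃ t, t ∉ P ∧ ∀ y ∈ A P, x ∣ y * t := by
    intro P hP
    have hPm := ((hmem P).mp hP).1
    have := hPm.isPrime hs
    refine ⟨∏ Q ∈ F.erase P, a P Q, ?_, ?_⟩
    · intro hin
      obtain ⟨Q, hQ, hin⟩ := (Ideal.IsPrime.prod_mem_iff (p := P)).mp hin
      obtain ⟨hne, hQ⟩ := Finset.mem_erase.mp hQ
      exact (hab P Q hPm ((hmem Q).mp hQ).1 hne.symm).1 hin
    · intro y hy
      have hle : A P ≤ Submodule.comap (LinearMap.mulRight D (∏ Q ∈ F.erase P, a P Q))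
          (Ideal.span {x}) := by
        rw [hAdef]
        refine Ideal.span_le.mpr fun g hg => ?_
        change g * _ ∈ Ideal.span {x}
        rw [Ideal.mem_span_singleton]
        rcases Finset.mem_insert.mp (Finset.mem_coe.mp hg) with rfl | hg
        · exact dvd_mul_right _ _
        · obtain ⟨Q, hQ, rfl⟩ := Finset.mem_image.mp hg
          have h2 := Finset.mem_erase.mp hQ
          have h3 := (hab P Q hPm ((hmem Q).mp h2.2).1 h2.1.symm).2.2
          rw [mul_comm] at h3
          exact h3.trans (mul_dvd_mul_left _ (Finset.dvd_prod_of_mem _ hQ))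
      exact Ideal.mem_span_singleton.mp (hle hy)
  have hAP : ∀ P ∈ F, A P ≤ P := by
    intro P hP y hy
    obtain ⟨hPm, hxP⟩ := (hmem P).mp hP
    obtain ⟨t, ht, hty⟩ := hloc P hP
    exact (((hPm.isPrime hs).mem_or_mem (P.mem_of_dvd (hty y hy) hxP))).resolve_right ht
  have huniq : ∀ P ∈ F, ∀ Q, s.IsMaxStarIdeal Q → A P ≤ Q → Q = P := by
    intro P hP Q hQ hle
    by_contra hne
    exact hnot P hP Q ((hmem Q).mpr ⟨hQ, hle (hxA P)⟩) hne hle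
  have hprod0 : ∏ P ∈ F, A P ≠ ⊥ := Finset.prod_ne_zero_iff.mpr fun j _ => hA0 j
  have hcprod0 : ∏ P ∈ F, s.cl (A P) ≠ ⊥ := Finset.prod_ne_zero_iff.mpr fun j _ => s.cl_ne (hA0 j)
  have hle1 : ∏ P ∈ F, A P ≤ Ideal.span {x} := by
    intro y hy
    rw [← s.cl_span hx]
    refine s.mem_cl_of_local hs hsx fun P hP => ?_
    by_cases hxP : x ∈ P
    · have hPF : P ∈ F := (hmem P).mpr ⟨hP, hxP⟩
      obtain ⟨t, ht, hty⟩ := hloc P hPF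
      refine ⟨t, ht, Ideal.mem_span_singleton.mpr (hty y ?_)⟩
      rw [← Finset.mul_prod_erase _ _ hPF] at hy
      exact (Ideal.mul_le_inf (I := A P) (J := ∏ Q ∈ F.erase P, A Q) hy).1
    · exact ⟨x, hxP, Ideal.mem_span_singleton.mpr (dvd_mul_left _ _)⟩
  have hle2 : x ∈ s.cl (∏ P ∈ F, A P) := by
    refine s.mem_cl_of_local hs hprod0 fun P hP => ?_
    have := hP.isPrime hs
    by_cases hxP : x ∈ P
    · have hPF : P ∈ F := (hmem P).mpr ⟨hP, hxP⟩
      obtain ⟨t, htm, ht⟩ := exists_notMem_prod (P := P) (F.erase P) A (fun Q hQ => by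
        obtain ⟨h1, h2⟩ := Finset.mem_erase.mp hQ
        exact hnot Q h2 P hPF h1.symm)
      refine ⟨t, ht, ?_⟩
      rw [← Finset.mul_prod_erase _ _ hPF]
      exact Ideal.mul_mem_mul (hxA P) htm
    · obtain ⟨t, htm, ht⟩ := exists_notMem_prod (P := P) F A (fun Q hQ hle => hxP (hle (hxA Q)))
      exact ⟨t, ht, Ideal.mul_mem_left _ _ htm⟩
  refine ⟨F.val.map fun P => s.cl (A P), ?_, ?_⟩
  · intro J hJ
    obtain ⟨P, hP, rfl⟩ := Multiset.mem_map.mp hJ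
    have hP : P ∈ F := hP
    have hPm := ((hmem P).mp hP).1
    have hclP : s.cl (A P) ≤ P := by
      exact (s.cl_mono (hA0 P) (hAP P hP)).trans_eq hPm.cl_eq
    refine ⟨fun h => hPm.1 (top_le_iff.mp (h ▸ hclP)),
      s.isStarIdeal_iff.mpr ⟨s.cl_ne (hA0 P), s.cl_cl (hA0 P)⟩,
      ⟨A P, hA0 P, ⟨_, (hAdef P).symm⟩, s.coe_cl (hA0 P)⟩, ?_⟩
    have aux : ∀ J : Ideal D, J ≠ ⊤ → s.IsStarIdeal J → s.cl (A P) ≤ J → J ≤ P := by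
      intro J hJt hJs hle
      obtain ⟨hJ0, hJc⟩ := s.isStarIdeal_iff.mp hJs
      obtain ⟨Q, hQ, hJQ⟩ := s.exists_max hs hJ0 (by rwa [hJc])
      rwa [← huniq P hP Q hQ (((s.le_cl (hA0 P)).trans hle).trans hJQ)]
    intro J J' hJ hJ' hJs hJs' _ _ hle hle' h1
    have hN : J + J' ≠ ⊥ := ne_bot_of_le hJs.1 le_sup_left
    rw [s.star_eq_one_iff hN] at h1
    apply hPm.1
    rw [← top_le_iff, ← h1, ← hPm.cl_eq]
    refine s.cl_mono hN (sup_le ?_ ?_)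
    · exact aux J hJ hJs hle
    · exact aux J' hJ' hJs' hle'
  · change s.star ((∏ P ∈ F, s.cl (A P) : Ideal D) : FractionalIdeal D⁰ K) = _
    rw [s.coe_cl hcprod0]
    congr 1
    apply le_antisymm
    · rw [← s.cl_span hx, ← s.cl_cl hsx]
      exact s.cl_mono hcprod0 ((s.prod_cl_le F A hA0).trans (s.cl_mono hprod0 hle1))
    · rw [Ideal.span_le, Set.singleton_subset_iff]
      refine s.cl_mono hprod0 ?_ hle2
      exact Finset.prod_le_prod' fun P _ => s.le_cl (hA0 P)

end Helpers

end StarOperation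

/-- `D` is a `*`-SH domain iff `D` has finite `*`-character and no two
distinct maximal `*`-ideals contain a common nonzero prime ideal. -/
theorem isSHDomain_iff {D K : Type*} [CommRing D] [IsDomain D] [Field K]
    [Algebra D K] [IsFractionRing D K] (s : StarOperation D K) (hs : s.FiniteCharacter) :
    s.IsSHDomain ↔
      s.FiniteStarCharacter ∧
      ∀ P Q : Ideal D, s.IsMaxStarIdeal P → s.IsMaxStarIdeal Q → P ≠ Q →
        ∀ L : Ideal D, L.IsPrime → L ≠ ⊥ → ¬(L ≤ P ⊓ Q) := by
  exact ⟨s.forward hs, fun h => s.backward hs h.1 h.2⟩
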